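/- arXiv:1303.0828 — 4 statements merged into one kernel-verified Lean document; each statement's English description precedes it below -/
import Mathlib

section
/- Every ℂ-algebra automorphism σ of the Laurent polynomial ring ℂ[ℤⁿ] is monomial: there exist a unique group automorphism φ of ℤⁿ and a unique group homomorphism c : ℤⁿ → ℂˣ such that σ(Xᵃ) = c(a)·X^{φ(a)} for all a ∈ ℤⁿ. (This is the decomposition, established in the proof of Proposition 2.6, of each algebraic automorphism w of the torus 𝒪_ℂ as a translation t_w composed with a group automorphism λ_w.) -/
namespace AddMonoidAlgebra

/-- A left factor of `1` in a monoid algebra with two unique sums is a monomial. -/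
theorem exists_eq_single_of_mul_eq_one {R A : Type*} [Semiring R] [NoZeroDivisors R] [Nontrivial R]
    [AddZeroClass A] [TwoUniqueSums A] {f g : AddMonoidAlgebra R A} (hfg : f * g = 1) :
    ∃ a : A, ∃ r : R, r ≠ 0 ∧ f = single a r := by
  have hf : f ≠ 0 := by rintro rfl; simp at hfg
  have hg : g ≠ 0 := by rintro rfl; simp at hfg
  have hfpos : 0 < f.coeff.support.card := by simpa [Finset.card_pos] using hf
  have hgpos : 0 < g.coeff.support.card := by simpa [Finset.card_pos] using hg
  have add_eq_zero : ∀ p ∈ f.coeff.support ×ˢ g.coeff.support,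
      UniqueAdd f.coeff.support g.coeff.support p.1 p.2 → p.1 + p.2 = 0 := by
    intro p hp hu
    rw [Finset.mem_product, Finsupp.mem_support_iff, Finsupp.mem_support_iff] at hp
    have hne := mul_ne_zero hp.1 hp.2
    rw [← coeff_mul_add_of_uniqueAdd hu, hfg, one_def, coeff_single] at hne
    by_contra h
    exact hne (Finsupp.single_eq_of_ne h)
  have hcard : f.coeff.support.card = 1 := by
    by_contra hne
    obtain ⟨p, hp, q, hq, hpq, hup, huq⟩ :=
      TwoUniqueSums.uniqueAdd_of_one_lt_card
        (A := f.coeff.support) (B := g.coeff.support)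
        (Nat.one_lt_mul_iff.mpr ⟨hfpos, hgpos, Or.inl (by omega)⟩)
    have heq := (add_eq_zero q hq huq).trans (add_eq_zero p hp hup).symm
    rw [Finset.mem_product] at hq
    exact hpq (Prod.ext_iff.mpr (hup hq.1 hq.2 heq)).symm
  obtain ⟨a, r, hr, h⟩ := Finsupp.card_support_eq_one'.mp hcard
  exact ⟨a, r, hr, coeff_injective h⟩

variable {K G H : Type*} [Field K] [AddGroup G] [AddGroup H]

/-- An algebra homomorphism into a group algebra with two unique sums sends each group element
to a monomial, whose exponent and coefficient depend multiplicatively on the group element. -/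
theorem exists_algHom_single_eq [TwoUniqueSums H]
    (σ : AddMonoidAlgebra K G →ₐ[K] AddMonoidAlgebra K H) :
    ∃ (φ : G →+ H) (c : G →+ Additive Kˣ),
      ∀ a, σ (single a 1) = single (φ a) ((c a).toMul : K) := by
  have hσ : ∀ a, ∃ b : H, ∃ u : Kˣ, σ (single a 1) = single b (u : K) := by
    intro a
    have h : σ (single a 1) * σ (single (-a) 1) = 1 := by
      rw [← map_mul, single_mul_single, add_neg_cancel, one_mul, ← one_def, map_one]
    obtain ⟨b, r, hr, hb⟩ := exists_eq_single_of_mul_eq_one h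
    exact ⟨b, Units.mk0 r hr, hb⟩
  choose φ c h using hσ
  have hadd : ∀ a b, φ (a + b) = φ a + φ b ∧ c (a + b) = c a * c b := by
    intro a b
    have hab : σ (single (a + b) 1) = σ (single a 1) * σ (single b 1) := by
      rw [← map_mul, single_mul_single, one_mul]
    rw [h, h, h, single_mul_single, single_inj] at hab
    simpa [Units.ext_iff] using hab
  exact ⟨AddMonoidHom.mk' φ fun a b => (hadd a b).1,
    AddMonoidHom.mk' (fun a => Additive.ofMul (c a)) fun a b => congrArg Additive.ofMul (hadd a b).2,
    h⟩

/-- If a homomorphism is monomial with exponent map `φ` and a left inverse of it is monomial with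
exponent map `ψ`, then `ψ` is a left inverse of `φ`. -/
theorem leftInverse_of_single_eq {σ : AddMonoidAlgebra K G →ₐ[K] AddMonoidAlgebra K H}
    {τ : AddMonoidAlgebra K H →ₐ[K] AddMonoidAlgebra K G} (hτσ : Function.LeftInverse τ σ)
    {φ : G → H} {c : G → K} {ψ : H → G} {d : H → K}
    (hσ : ∀ a, σ (single a 1) = single (φ a) (c a))
    (hτ : ∀ b, τ (single b 1) = single (ψ b) (d b)) : Function.LeftInverse ψ φ := by
  intro a
  have h := hτσ (single a 1)
  rw [hσ, ← mul_one (c a), ← smul_eq_mul, ← smul_single, map_smul, hτ, smul_single,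
    single_inj] at h
  exact (h.resolve_right fun hz => one_ne_zero hz.2).1

end AddMonoidAlgebra

/-- Every `ℂ`-algebra automorphism `σ` of the Laurent polynomial ring `ℂ[ℤⁿ]` is monomial:
there is a unique pair consisting of a group automorphism `φ` of `ℤⁿ` and a group
homomorphism `c : ℤⁿ → ℂˣ` such that `σ(Xᵃ) = c(a) • X^{φ(a)}` for all `a ∈ ℤⁿ`. -/
theorem algebra_automorphism_of_laurent_ring_is_monomial (n : ℕ) (hn : 1 ≤ n)
    (σ : AddMonoidAlgebra ℂ (Fin n → ℤ) ≃ₐ[ℂ] AddMonoidAlgebra ℂ (Fin n → ℤ)) :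
    ∃! p : ((Fin n → ℤ) ≃+ (Fin n → ℤ)) × ((Fin n → ℤ) →+ Additive ℂˣ),
      ∀ a : Fin n → ℤ,
        σ (AddMonoidAlgebra.single a 1)
          = ((Additive.toMul (p.2 a) : ℂˣ) : ℂ) • AddMonoidAlgebra.single (p.1 a) (1 : ℂ) := by
  obtain ⟨φ, c, hσ⟩ := AddMonoidAlgebra.exists_algHom_single_eq σ.toAlgHom
  obtain ⟨ψ, d, hτ⟩ := AddMonoidAlgebra.exists_algHom_single_eq σ.symm.toAlgHom
  have hψφ := AddMonoidAlgebra.leftInverse_of_single_eq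
    (σ := σ.toAlgHom) (τ := σ.symm.toAlgHom) σ.symm_apply_apply hσ hτ
  have hφψ := AddMonoidAlgebra.leftInverse_of_single_eq
    (σ := σ.symm.toAlgHom) (τ := σ.toAlgHom) σ.apply_symm_apply hτ hσ
  refine ⟨(⟨⟨φ, ψ, hψφ, hφψ⟩, φ.map_add⟩, c), fun a => ?_, fun q hq => ?_⟩
  · rw [AddMonoidAlgebra.smul_single, smul_eq_mul, mul_one]
    exact hσ a
  · have h : ∀ a, q.1 a = φ a ∧ q.2 a = c a := by
      intro a
      have ha := (hq a).symm.trans (hσ a)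
      rw [AddMonoidAlgebra.smul_single, smul_eq_mul, mul_one, AddMonoidAlgebra.single_inj] at ha
      simpa [← Units.ext_iff] using ha
    exact Prod.ext (AddEquiv.ext fun a => (h a).1) (AddMonoidHom.ext fun a => (h a).2)
end

section
/- Let M₁, …, M_k be n×n integer matrices and let H = { x ∈ (ℂˣ)ⁿ : x^{M_i} = x for all i }, a subgroup of (ℂˣ)ⁿ. Let V = { v ∈ ℂⁿ : M_i v = v for all i }. Then e(V) is a subgroup of H and H is a union of finitely many cosets of e(V): there exists a finite subset F ⊆ H with H = { s·f : s ∈ e(V), f ∈ F }. (This is the assertion in the proof of Proposition 2.6 that the common fixed-point group 𝒪_ℂ^{λ(W)} equals (𝒪_ℂ^{λ(W)})°·F_W with (𝒪_ℂ^{λ(W)})° the image of the invariants in the Lie algebra under the exponential map and F_W finite.) -/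
open scoped BigOperators

/-- The monomial endomorphism `x ↦ x^M` of the complex torus `(ℂˣ)ⁿ` attached to an
`n × n` integer matrix `M`: `(x^M)_i = ∏_j (x_j)^(M i j)`. -/
def monomialPow (n : ℕ) (M : Matrix (Fin n) (Fin n) ℤ) (x : Fin n → ℂˣ) : Fin n → ℂˣ :=
  fun i => ∏ j, (x j) ^ (M i j)

/-- The exponential homomorphism `e : ℂⁿ → (ℂˣ)ⁿ`, `e(v)_j = exp (v_j)`. -/
noncomputable def expTorus (n : ℕ) (v : Fin n → ℂ) : Fin n → ℂˣ :=
  fun j => Units.mk0 (Complex.exp (v j)) (Complex.exp_ne_zero _)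

/-- A denominator-free generalized inverse of an integer matrix. -/
lemma exists_int_generalized_inverse {m n : Type*} [Fintype m] [Fintype n]
    [DecidableEq m] [DecidableEq n] (A : Matrix m n ℤ) :
    ∃ (c : ℤ) (B : Matrix n m ℤ), c ≠ 0 ∧ A * B * A = c • A := by
  set A' : Matrix m n ℚ := A.map (Int.cast : ℤ → ℚ) with hA'
  obtain ⟨r, hr⟩ := (Matrix.toLin' A').rangeRestrict.exists_rightInverse_of_surjective
    (LinearMap.range_rangeRestrict _)
  obtain ⟨g, hg⟩ := LinearMap.exists_extend r
  have hinv : A' * LinearMap.toMatrix' g * A' = A' := by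
    apply Matrix.toLin'.injective
    refine LinearMap.ext fun v => ?_
    have h₁ := LinearMap.congr_fun hg ((Matrix.toLin' A').rangeRestrict v)
    have h₂ := congrArg Subtype.val
      (LinearMap.congr_fun hr ((Matrix.toLin' A').rangeRestrict v))
    simp only [LinearMap.comp_apply, Submodule.subtype_apply, LinearMap.codRestrict_apply,
      LinearMap.rangeRestrict, LinearMap.id_apply] at h₁ h₂
    rw [Matrix.toLin'_mul, Matrix.toLin'_mul, Matrix.toLin'_toMatrix', LinearMap.comp_apply,
      LinearMap.comp_apply, h₁, h₂]
  obtain ⟨c, hc⟩ := IsLocalization.exist_integer_multiples_of_finite (nonZeroDivisors ℤ)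
    (fun p : n × m => LinearMap.toMatrix' g p.1 p.2)
  choose b hb using hc
  refine ⟨c, Matrix.of fun i j => b (i, j), nonZeroDivisors.ne_zero c.2, ?_⟩
  apply Matrix.map_injective (Int.cast_injective (α := ℚ))
  have hB : (Matrix.of fun i j => b (i, j)).map (Int.cast : ℤ → ℚ)
      = (c : ℤ) • LinearMap.toMatrix' g := by
    ext i j
    simpa using hb (i, j)
  have hmul : ((A * Matrix.of (fun i j => b (i, j)) * A).map (Int.cast : ℤ → ℚ))
      = A' * (Matrix.of fun i j => b (i, j)).map (Int.cast : ℤ → ℚ) * A' := by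
    ext i j
    simp [hA', Matrix.mul_apply]
  beta_reduce
  rw [hmul, hB, Matrix.mul_smul, Matrix.smul_mul, hinv]
  ext i j
  simp [hA']

lemma expTorus_zero (n : ℕ) : expTorus n 0 = 1 := by
  ext j
  simp [expTorus]

lemma expTorus_add (n : ℕ) (u v : Fin n → ℂ) :
    expTorus n (u + v) = expTorus n u * expTorus n v := by
  ext j
  simp [expTorus, Complex.exp_add]

lemma expTorus_neg (n : ℕ) (v : Fin n → ℂ) : expTorus n (-v) = (expTorus n v)⁻¹ := by
  rw [eq_inv_iff_mul_eq_one, ← expTorus_add, neg_add_cancel, expTorus_zero]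

lemma expTorus_surjective (n : ℕ) : Function.Surjective (expTorus n) := by
  refine fun x => ⟨fun j => Complex.log (x j), ?_⟩
  ext j
  simp [expTorus, Complex.exp_log]

lemma expTorus_eq_iff (n : ℕ) (u v : Fin n → ℂ) :
    expTorus n u = expTorus n v ↔
      ∃ w : Fin n → ℤ, ∀ j, u j = v j + w j * (2 * Real.pi * Complex.I) := by
  rw [← Classical.skolem (p := fun j (w : ℤ) => u j = v j + w * (2 * Real.pi * Complex.I)),
    funext_iff]
  simp [expTorus, Units.ext_iff, Complex.exp_eq_exp_iff_exists_int]

lemma monomialPow_expTorus (n : ℕ) (M : Matrix (Fin n) (Fin n) ℤ) (v : Fin n → ℂ) :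
    monomialPow n M (expTorus n v) =
      expTorus n ((M.map (Int.cast : ℤ → ℂ)).mulVec v) := by
  ext i
  simp [monomialPow, expTorus, Matrix.mulVec, dotProduct, Complex.exp_sum, Complex.exp_int_mul]

lemma monomialPow_mul (n : ℕ) (M : Matrix (Fin n) (Fin n) ℤ) (x y : Fin n → ℂˣ) :
    monomialPow n M (x * y) = monomialPow n M x * monomialPow n M y := by
  funext i
  simp [monomialPow, mul_zpow, Finset.prod_mul_distrib]

lemma finite_zpow_eq_one (n : ℕ) {c : ℤ} (hc : c ≠ 0) :
    {t : Fin n → ℂˣ | t ^ c = 1}.Finite := by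
  have : NeZero c.natAbs := ⟨Int.natAbs_ne_zero.mpr hc⟩
  have hfin : ((rootsOfUnity c.natAbs ℂ : Subgroup ℂˣ) : Set ℂˣ).Finite :=
    inferInstanceAs (Finite (rootsOfUnity c.natAbs ℂ))
  refine (Set.Finite.pi' fun _ : Fin n => hfin).subset fun t ht j => ?_
  have hj : t j ^ c = 1 := congrFun ht j
  simpa [mem_rootsOfUnity] using hj

/-- Every element of the common fixed group is the product of an element of `e(V)` and a
`c`-torsion element, with `c` independent of the element. -/
lemma exists_expTorus_mul_torsion {n k : ℕ} (M : Fin k → Matrix (Fin n) (Fin n) ℤ) :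
    ∃ c : ℤ, c ≠ 0 ∧ ∀ x : Fin n → ℂˣ, (∀ i, monomialPow n (M i) x = x) →
      ∃ v : Fin n → ℂ, (∀ i, ((M i).map (Int.cast : ℤ → ℂ)).mulVec v = v) ∧
        ∃ t : Fin n → ℂˣ, t ^ c = 1 ∧ x = expTorus n v * t := by
  let A : Matrix (Fin k × Fin n) (Fin n) ℤ := Matrix.of fun p b => (M p.1 - 1) p.2 b
  obtain ⟨c, B, hc, hABA⟩ := exists_int_generalized_inverse A
  have hcC : (c : ℂ) ≠ 0 := Int.cast_ne_zero.mpr hc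
  set AC := A.map (Int.cast : ℤ → ℂ) with hAC
  set BC := B.map (Int.cast : ℤ → ℂ) with hBC
  have hABA' : AC * BC * AC = (c : ℂ) • AC := by
    have := congrArg (fun X => X.map (Int.cast : ℤ → ℂ)) hABA
    ext i j
    simpa [hAC, hBC, Matrix.mul_apply] using congrFun (congrFun this i) j
  have hA (v : Fin n → ℂ) (i : Fin k) (a : Fin n) :
      AC.mulVec v (i, a) = ((M i).map (Int.cast : ℤ → ℂ)).mulVec v a - v a := by
    have : AC.mulVec v (i, a) = ((M i).map (Int.cast : ℤ → ℂ) - 1).mulVec v a := by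
      simp [hAC, A, Matrix.mulVec, dotProduct, Matrix.one_apply, apply_ite (Int.cast : ℤ → ℂ)]
    rw [this, Matrix.sub_mulVec, Matrix.one_mulVec, Pi.sub_apply]
  refine ⟨c, hc, fun x hx => ?_⟩
  obtain ⟨u, rfl⟩ := expTorus_surjective n x
  simp only [monomialPow_expTorus, expTorus_eq_iff] at hx
  choose w hw using hx
  let z : Fin k × Fin n → ℤ := fun p => w p.1 p.2
  have hz : AC.mulVec u = (2 * Real.pi * Complex.I) • fun p => (z p : ℂ) := by
    ext ⟨i, a⟩
    rw [hA, hw]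
    simp [z, mul_comm]
  -- `y` is the torsion part in logarithmic coordinates
  let y : Fin n → ℂ := (c : ℂ)⁻¹ • BC.mulVec (AC.mulVec u)
  have hy : AC.mulVec (u - y) = 0 := by
    rw [Matrix.mulVec_sub, Matrix.mulVec_smul, Matrix.mulVec_mulVec, Matrix.mulVec_mulVec,
      hABA', Matrix.smul_mulVec, inv_smul_smul₀ hcC, sub_self]
  refine ⟨u - y, fun i => funext fun a => ?_, expTorus n y, ?_, ?_⟩
  · rw [← sub_eq_zero, ← hA, hy, Pi.zero_apply]
  · have hcy (j : Fin n) :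
        (c : ℂ) * y j = (B.mulVec z j : ℤ) * (2 * Real.pi * Complex.I) := by
      simp only [y, hz, Matrix.mulVec_smul, Pi.smul_apply, smul_eq_mul]
      rw [mul_inv_cancel_left₀ hcC, mul_comm]
      simp [hBC, Matrix.mulVec, dotProduct]
    ext j
    simp only [expTorus, Pi.pow_apply, Units.val_zpow_eq_zpow_val, Units.val_mk0, Pi.one_apply,
      Units.val_one]
    rw [← Complex.exp_int_mul, hcy, Complex.exp_int_mul_two_pi_mul_I]
  · rw [← expTorus_add, sub_add_cancel]

/-- Let `M₁, …, M_k` be `n × n` integer matrices, `H = {x ∈ (ℂˣ)ⁿ : x^{Mᵢ} = x for all i}`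
and `V = {v ∈ ℂⁿ : Mᵢ v = v for all i}`. Then `e(V)` is a subgroup of `H`, and `H` is the
union of finitely many cosets of `e(V)`. -/
theorem common_fixed_group_is_finite_union_of_cosets_of_exp_invariants
    (n k : ℕ) (M : Fin k → Matrix (Fin n) (Fin n) ℤ) :
    let H : Set (Fin n → ℂˣ) := {x | ∀ i, monomialPow n (M i) x = x}
    let V : Set (Fin n → ℂ) := {v | ∀ i, ((M i).map (Int.cast : ℤ → ℂ)).mulVec v = v}
    (∃ S : Subgroup (Fin n → ℂˣ),
        (S : Set (Fin n → ℂˣ)) = expTorus n '' V ∧ (S : Set (Fin n → ℂˣ)) ⊆ H) ∧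
      ∃ F : Finset (Fin n → ℂˣ), (F : Set (Fin n → ℂˣ)) ⊆ H ∧
        H = {x | ∃ s ∈ expTorus n '' V, ∃ f ∈ F, x = s * f} := by
  intro H V
  have hVH : expTorus n '' V ⊆ H := by
    rintro _ ⟨v, hv, rfl⟩ i
    rw [monomialPow_expTorus, hv i]
  refine ⟨⟨{ carrier := expTorus n '' V
             mul_mem' := ?_
             one_mem' := ⟨0, fun i => Matrix.mulVec_zero _, expTorus_zero n⟩
             inv_mem' := ?_ }, rfl, hVH⟩, ?_⟩
  · rintro _ _ ⟨u, hu, rfl⟩ ⟨v, hv, rfl⟩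
    exact ⟨u + v, fun i => by rw [Matrix.mulVec_add, hu i, hv i], expTorus_add n u v⟩
  · rintro _ ⟨v, hv, rfl⟩
    exact ⟨-v, fun i => by rw [Matrix.mulVec_neg, hv i], expTorus_neg n v⟩
  · obtain ⟨c, hc, hdecomp⟩ := exists_expTorus_mul_torsion M
    have hfin : ({t : Fin n → ℂˣ | t ^ c = 1} ∩ H).Finite :=
      (finite_zpow_eq_one n hc).subset Set.inter_subset_left
    refine ⟨hfin.toFinset, by simp, Set.Subset.antisymm ?_ ?_⟩
    · intro x hx
      obtain ⟨v, hv, t, ht, rfl⟩ := hdecomp x hx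
      refine ⟨_, ⟨v, hv, rfl⟩, t, hfin.mem_toFinset.mpr ⟨ht, fun i => ?_⟩, rfl⟩
      have h := hx i
      rwa [monomialPow_mul, hVH ⟨v, hv, rfl⟩ i, mul_right_inj] at h
    · rintro _ ⟨s, hs, f, hf, rfl⟩ i
      rw [monomialPow_mul, hVH hs i, (hfin.mem_toFinset.mp hf).2 i]
end

section
/- For every finite group W and every n ≥ 1 there are, up to conjugation, only finitely many group homomorphisms from W to PGLₙ(ℂ): there exists a finite list of homomorphisms h₁, …, h_m : W → PGLₙ(ℂ) such that every homomorphism h : W → PGLₙ(ℂ) satisfies h(w) = g·h_i(w)·g⁻¹ for some fixed i and g ∈ PGLₙ(ℂ) and all w ∈ W. (This is the claim in the proof of Lemma 2.4 that there are only finitely many equivalence classes of projective representations of a finite group in a given dimension.) -/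
open Matrix

/-- The families of unitary matrices indexed by `W` that are multiplicative up to the
multiplier `c`. -/
def unitaryProjectiveReps {W : Type*} [Mul W] (ι : Type*) [Fintype ι] [DecidableEq ι]
    (c : W → W → ℂ) : Set (W → Matrix ι ι ℂ) :=
  {F | (∀ w, F w ∈ unitaryGroup ι ℂ) ∧ ∀ u v, F u * F v = c u v • F (u * v)}

theorem isCompact_unitaryGroup (ι : Type*) [Fintype ι] [DecidableEq ι] :
    IsCompact (unitaryGroup ι ℂ : Set (Matrix ι ι ℂ)) := by
  have hbox : IsCompact (Set.univ.pi fun _ : ι => Set.univ.pi fun _ : ι =>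
      Metric.closedBall (0 : ℂ) 1 : Set (Matrix ι ι ℂ)) :=
    isCompact_univ_pi fun _ => isCompact_univ_pi fun _ => isCompact_closedBall _ _
  refine hbox.of_isClosed_subset ?_ ?_
  · have : (unitaryGroup ι ℂ : Set (Matrix ι ι ℂ)) = {A | A * star A = 1} := by
      ext A
      exact mem_unitaryGroup_iff
    rw [this]
    exact isClosed_eq (by fun_prop) continuous_const
  · intro A hA i _ j _
    simpa using entry_norm_bound_of_unitary hA i j

theorem isCompact_unitaryProjectiveReps {W : Type*} [Mul W] (ι : Type*) [Fintype ι]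
    [DecidableEq ι] (c : W → W → ℂ) : IsCompact (unitaryProjectiveReps ι c) := by
  refine (isCompact_univ_pi fun _ : W => isCompact_unitaryGroup ι).of_isClosed_subset ?_
    fun F hF w _ => hF.1 w
  have hclosed : IsClosed {F : W → Matrix ι ι ℂ | ∀ w, F w ∈ unitaryGroup ι ℂ} := by
    simp only [Set.ofPred_forall]
    exact isClosed_iInter fun w => (isCompact_unitaryGroup ι).isClosed.preimage (continuous_apply w)
  have hmul : IsClosed {F : W → Matrix ι ι ℂ | ∀ u v, F u * F v = c u v • F (u * v)} := by
    simp only [Set.ofPred_forall]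
    exact isClosed_iInter fun u => isClosed_iInter fun v => isClosed_eq (by fun_prop) (by fun_prop)
  exact hclosed.inter hmul

/-- Averaging over the group intertwines two unitary projective representations with the same
multiplier. -/
theorem mul_sum_mul_star_eq_sum_mul_star_mul {W ι : Type*} [Group W] [Fintype W] [Fintype ι]
    [DecidableEq ι] {c : W → W → ℂ} (hc : ∀ u v, ‖c u v‖ = 1) {F G : W → Matrix ι ι ℂ}
    (hF : F ∈ unitaryProjectiveReps ι c) (hG : G ∈ unitaryProjectiveReps ι c) (u : W) :
    F u * ∑ w, F w * star (G w) = (∑ w, F w * star (G w)) * G u := by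
  rw [Finset.mul_sum, Finset.sum_mul,
    ← Equiv.sum_comp (Equiv.mulLeft u) fun w => F w * star (G w) * G u]
  refine Finset.sum_congr rfl fun w _ => ?_
  have hGw : G w = star (G u) * (c u w • G (u * w)) := by
    rw [← hG.2 u w, ← mul_assoc, mem_unitaryGroup_iff'.mp (hG.1 u), one_mul]
  have hcc : star (c u w) * c u w = 1 := by
    rw [mul_comm]
    simp [Complex.mul_conj, Complex.normSq_eq_norm_sq, hc]
  rw [hGw, ← mul_assoc, hF.2 u w]
  simp only [star_mul, star_smul, star_star, smul_mul_assoc, mul_smul_comm, smul_smul, hcc,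
    one_smul, Equiv.coe_mulLeft, mul_assoc]

/-- Finitely many unitary projective representations with a given unimodular multiplier meet
every conjugacy class of such. -/
theorem exists_finset_unitaryProjectiveReps {W : Type*} [Group W] [Finite W] (ι : Type*)
    [Fintype ι] [DecidableEq ι] {c : W → W → ℂ} (hc : ∀ u v, ‖c u v‖ = 1) :
    ∃ t : Finset (W → Matrix ι ι ℂ), ∀ F ∈ unitaryProjectiveReps ι c,
      ∃ G ∈ t, ∃ S : GL ι ℂ, ∀ w, F w * S = S * G w := by
  have := Fintype.ofFinite W
  obtain ⟨t, ht, hcover⟩ := (isCompact_unitaryProjectiveReps ι c).elim_nhds_subcover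
    (fun G => {F | (∑ w, F w * star (G w)).det ≠ 0}) fun G hG => by
      refine IsOpen.mem_nhds (isOpen_ne.preimage (f := fun F : W → Matrix ι ι ℂ =>
        (∑ w, F w * star (G w)).det) (by fun_prop)) ?_
      have hsum : ∑ w, G w * star (G w) = (Fintype.card W : ℂ) • 1 := by
        simp [fun w => mem_unitaryGroup_iff.mp (hG.1 w), Nat.cast_smul_eq_nsmul]
      simp [hsum]
  refine ⟨t, fun F hF => ?_⟩
  obtain ⟨G, hGt, hdet⟩ := Set.mem_iUnion₂.mp (hcover hF)
  exact ⟨G, hGt, GeneralLinearGroup.mkOfDetNeZero _ hdet,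
    mul_sum_mul_star_eq_sum_mul_star_mul hc hF (ht G hGt)⟩

open scoped MatrixOrder ComplexOrder Matrix.Norms.L2Operator in
/-- A projective representation of a finite group with unimodular multiplier is conjugate to a
unitary one. -/
theorem exists_conj_mem_unitaryProjectiveReps {W ι : Type*} [Group W] [Finite W] [Fintype ι]
    [DecidableEq ι] {c : W → W → ℂ} (hc : ∀ u v, ‖c u v‖ = 1) (F : W → GL ι ℂ)
    (hF : ∀ u v, (F u * F v : Matrix ι ι ℂ) = c u v • (F (u * v) : Matrix ι ι ℂ)) :
    ∃ S : GL ι ℂ, (fun w => ((S * F w * S⁻¹ : GL ι ℂ) : Matrix ι ι ℂ)) ∈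
      unitaryProjectiveReps ι c := by
  have := Fintype.ofFinite W
  set P : Matrix ι ι ℂ := ∑ w, star (F w : Matrix ι ι ℂ) * (F w : Matrix ι ι ℂ) with hP
  have hPpos : P.PosDef := posDef_sum Finset.univ_nonempty fun w _ =>
    PosDef.conjTranspose_mul_self _ (mulVec_injective_iff_isUnit.mpr (F w).isUnit)
  have hinv (u : W) : star (F u : Matrix ι ι ℂ) * P * (F u : Matrix ι ι ℂ) = P := by
    rw [hP, Finset.mul_sum, Finset.sum_mul, ← Equiv.sum_comp (Equiv.mulRight u)
      fun w => star (F w : Matrix ι ι ℂ) * (F w : Matrix ι ι ℂ)]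
    refine Finset.sum_congr rfl fun w _ => ?_
    have hcc : star (c w u) * c w u = 1 := by
      rw [mul_comm]
      simp [Complex.mul_conj, Complex.normSq_eq_norm_sq, hc]
    calc star (F u : Matrix ι ι ℂ) * (star (F w : Matrix ι ι ℂ) * F w) * F u
        = star (F w * F u : Matrix ι ι ℂ) * (F w * F u : Matrix ι ι ℂ) := by
          simp only [star_mul, mul_assoc]
      _ = _ := by
          rw [hF]
          simp only [star_smul, smul_mul_assoc, mul_smul_comm, smul_smul, mul_comm (c w u), hcc,
            one_smul, Equiv.coe_mulRight]
  obtain ⟨B, hB⟩ : ∃ B : Matrix ι ι ℂ, P = star B * B :=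
    CStarAlgebra.nonneg_iff_eq_star_mul_self.mp hPpos.posSemidef.nonneg
  have hBdet : B.det ≠ 0 := fun h => hPpos.det_pos.ne' (by simp [hB, h])
  refine ⟨GeneralLinearGroup.mkOfDetNeZero B hBdet, fun w => ?_, fun u v => ?_⟩
  · set S := GeneralLinearGroup.mkOfDetNeZero B hBdet
    have hS : (S : Matrix ι ι ℂ) = B := rfl
    have hSS : (S : Matrix ι ι ℂ) * (S⁻¹ : GL ι ℂ) = 1 := S.mul_inv
    rw [mem_unitaryGroup_iff']
    calc star ((S * F w * S⁻¹ : GL ι ℂ) : Matrix ι ι ℂ) * (S * F w * S⁻¹ : GL ι ℂ)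
        = star ((S⁻¹ : GL ι ℂ) : Matrix ι ι ℂ) *
            (star (F w : Matrix ι ι ℂ) * (star B * B) * F w) * (S⁻¹ : GL ι ℂ) := by
          simp only [Units.val_mul, star_mul, hS, mul_assoc]
      _ = star ((S : Matrix ι ι ℂ) * (S⁻¹ : GL ι ℂ)) * (S * (S⁻¹ : GL ι ℂ)) := by
          rw [← hB, hinv, hB, star_mul, hS]
          simp only [mul_assoc]
      _ = 1 := by rw [hSS, star_one, one_mul]
  · set S := GeneralLinearGroup.mkOfDetNeZero B hBdet
    calc ((S * F u * S⁻¹ : GL ι ℂ) : Matrix ι ι ℂ) * (S * F v * S⁻¹ : GL ι ℂ)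
        = S * (F u * F v : Matrix ι ι ℂ) * (S⁻¹ : GL ι ℂ) := by
          rw [← Units.val_mul, ← Units.val_mul, ← Units.val_mul, ← Units.val_mul]
          congr 1
          group
      _ = _ := by
          rw [hF]
          simp only [Units.val_mul, smul_mul_assoc, mul_smul_comm]

/-- Every element of `PGLₙ(ℂ)` lifts to a matrix of determinant one. -/
theorem exists_mk_eq_and_det_eq_one {ι : Type*} [Fintype ι] [DecidableEq ι] [Nonempty ι]
    (x : GL ι ℂ ⧸ Subgroup.center (GL ι ℂ)) :
    ∃ g : GL ι ℂ, (g : GL ι ℂ ⧸ Subgroup.center (GL ι ℂ)) = x ∧ (g : Matrix ι ι ℂ).det = 1 := by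
  obtain ⟨g, rfl⟩ := QuotientGroup.mk_surjective x
  have hg : (g : Matrix ι ι ℂ).det ≠ 0 := GeneralLinearGroup.det_ne_zero g
  obtain ⟨a, ha⟩ := IsAlgClosed.exists_pow_nat_eq ((g : Matrix ι ι ℂ).det)⁻¹
    (Fintype.card_pos (α := ι))
  have ha0 : a ≠ 0 := by
    rintro rfl
    rw [zero_pow Fintype.card_ne_zero] at ha
    exact inv_ne_zero hg ha.symm
  set z : GL ι ℂ := GeneralLinearGroup.scalar ι (Units.mk0 a ha0)
  have hz : z ∈ Subgroup.center (GL ι ℂ) := by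
    rw [GeneralLinearGroup.center_eq_range_scalar]
    exact ⟨_, rfl⟩
  refine ⟨g * z, QuotientGroup.mk_mul_of_mem g hz, ?_⟩
  have hzdet : (z : Matrix ι ι ℂ).det = a ^ Fintype.card ι := by simp [z]
  rw [Units.val_mul, det_mul, hzdet, ha, mul_inv_cancel₀ hg]

/-- A homomorphism to `PGLₙ(ℂ)` lifts to a projective representation whose multiplier consists
of `n`-th roots of unity. -/
theorem exists_lift_with_multiplier {W ι : Type*} [Group W] [Fintype ι] [DecidableEq ι]
    [Nonempty ι] (f : W →* GL ι ℂ ⧸ Subgroup.center (GL ι ℂ)) :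
    ∃ (F : W → GL ι ℂ) (c : W → W → ℂ), (∀ w, (F w : GL ι ℂ ⧸ Subgroup.center (GL ι ℂ)) = f w) ∧
      (∀ u v, c u v ^ Fintype.card ι = 1) ∧
      ∀ u v, (F u * F v : Matrix ι ι ℂ) = c u v • (F (u * v) : Matrix ι ι ℂ) := by
  choose F hF hdet using fun w => exists_mk_eq_and_det_eq_one (f w)
  have hmul (u v : W) : ∃ a : ℂ, a ^ Fintype.card ι = 1 ∧
      (F u * F v : Matrix ι ι ℂ) = a • (F (u * v) : Matrix ι ι ℂ) := by
    have hmem : (F (u * v))⁻¹ * (F u * F v) ∈ Subgroup.center (GL ι ℂ) := by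
      rw [← QuotientGroup.eq, QuotientGroup.mk_mul, hF, hF, hF, map_mul]
    obtain ⟨a, ha⟩ := GeneralLinearGroup.mem_center_iff_val_mem_range_scalar.mp hmem
    have hFa : (F u * F v : Matrix ι ι ℂ) = a • (F (u * v) : Matrix ι ι ℂ) := by
      rw [← Units.val_mul, ← mul_inv_cancel_left (F (u * v)) (F u * F v), Units.val_mul, ← ha]
      ext i j
      simp [mul_comm]
    refine ⟨a, ?_, hFa⟩
    simpa [hdet] using (congrArg det hFa).symm
  choose c hc hFc using hmul
  exact ⟨F, c, hF, hc, hFc⟩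

/-- Some conjugate of a lift of `f` to matrices equals `G`. -/
def IsConjLift {W ι : Type*} [Group W] [Fintype ι] [DecidableEq ι]
    (f : W →* GL ι ℂ ⧸ Subgroup.center (GL ι ℂ)) (G : W → Matrix ι ι ℂ) : Prop :=
  ∃ S : GL ι ℂ, ∀ w, ∃ g : GL ι ℂ, (g : GL ι ℂ ⧸ Subgroup.center (GL ι ℂ)) = f w ∧
    (g * S : Matrix ι ι ℂ) = S * G w

theorem IsConjLift.exists_conj {W ι : Type*} [Group W] [Fintype ι] [DecidableEq ι]
    {f f' : W →* GL ι ℂ ⧸ Subgroup.center (GL ι ℂ)} {G : W → Matrix ι ι ℂ}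
    (hf : IsConjLift f G) (hf' : IsConjLift f' G) :
    ∃ x : GL ι ℂ ⧸ Subgroup.center (GL ι ℂ), ∀ w, f w = x * f' w * x⁻¹ := by
  obtain ⟨S, hS⟩ := hf
  obtain ⟨T, hT⟩ := hf'
  refine ⟨((S * T⁻¹ : GL ι ℂ) : GL ι ℂ ⧸ Subgroup.center (GL ι ℂ)), fun w => ?_⟩
  obtain ⟨g, hg, hgS⟩ := hS w
  obtain ⟨k, hk, hkT⟩ := hT w
  have hG : G w = ((T⁻¹ * (k * T) : GL ι ℂ) : Matrix ι ι ℂ) := by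
    rw [Units.val_mul, Units.val_mul, hkT, Units.inv_mul_cancel_left]
  have hgk : g * S = S * (T⁻¹ * (k * T)) := by
    ext1
    rw [Units.val_mul, hgS, hG, ← Units.val_mul]
  have hconj : g = S * T⁻¹ * k * (S * T⁻¹)⁻¹ := by
    rw [eq_mul_inv_of_mul_eq hgk]
    group
  rw [← hg, ← hk, ← QuotientGroup.mk_inv, ← QuotientGroup.mk_mul, ← QuotientGroup.mk_mul, ← hconj]

theorem exists_finite_isConjLift (W ι : Type*) [Group W] [Finite W] [Fintype ι] [DecidableEq ι]
    [Nonempty ι] : ∃ t : Set (W → Matrix ι ι ℂ), t.Finite ∧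
      ∀ f : W →* GL ι ℂ ⧸ Subgroup.center (GL ι ℂ), ∃ G ∈ t, IsConjLift f G := by
  set C : Set (W → W → ℂ) := {c | ∀ u v, c u v ^ Fintype.card ι = 1}
  have hroots : {a : ℂ | a ^ Fintype.card ι = 1}.Finite := by
    refine (Polynomial.nthRootsFinset (Fintype.card ι) (1 : ℂ)).finite_toSet.subset fun a ha => ?_
    exact (Polynomial.mem_nthRootsFinset Fintype.card_pos _).mpr ha
  have hC : C.Finite := Set.Finite.pi' fun _ => Set.Finite.pi' fun _ => hroots
  have hnorm {c : W → W → ℂ} (hc : c ∈ C) (u v : W) : ‖c u v‖ = 1 :=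
    Complex.norm_eq_one_of_pow_eq_one (hc u v) Fintype.card_ne_zero
  choose! t ht using fun c (hc : c ∈ C) => exists_finset_unitaryProjectiveReps ι (hnorm hc)
  refine ⟨⋃ c ∈ C, t c, hC.biUnion fun c _ => (t c).finite_toSet, fun f => ?_⟩
  obtain ⟨F, c, hFf, hc, hFc⟩ := exists_lift_with_multiplier f
  obtain ⟨S, hS⟩ := exists_conj_mem_unitaryProjectiveReps (hnorm hc) F hFc
  obtain ⟨G, hG, T, hT⟩ := ht c hc _ hS
  refine ⟨G, Set.mem_biUnion hc hG, S⁻¹ * T, fun w => ⟨F w, hFf w, ?_⟩⟩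
  have := congrArg (fun A => ((S⁻¹ : GL ι ℂ) : Matrix ι ι ℂ) * A) (hT w)
  simpa only [Units.val_mul, ← mul_assoc, Units.inv_mul, one_mul] using this

/-- For every finite group `W` and `n ≥ 1` there are, up to conjugation, only finitely
many homomorphisms `W → PGLₙ(ℂ)`, where `PGLₙ(ℂ)` is the quotient of `GLₙ(ℂ)` by its
center. -/
theorem finitely_many_projective_representations_up_to_conjugation
    (W : Type*) [Group W] [Finite W] (n : ℕ) (hn : 1 ≤ n) :
    ∃ (m : ℕ)
      (h : Fin m → (W →* (GL (Fin n) ℂ ⧸ Subgroup.center (GL (Fin n) ℂ)))),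
      ∀ f : W →* (GL (Fin n) ℂ ⧸ Subgroup.center (GL (Fin n) ℂ)),
        ∃ (i : Fin m) (g : GL (Fin n) ℂ ⧸ Subgroup.center (GL (Fin n) ℂ)),
          ∀ w : W, f w = g * h i w * g⁻¹ := by
  have : Nonempty (Fin n) := ⟨⟨0, hn⟩⟩
  obtain ⟨t, ht, hlift⟩ := exists_finite_isConjLift W (Fin n)
  choose φ hφt hφ using hlift
  have hrange : (Set.range φ).Finite := ht.subset (Set.range_subset_iff.mpr hφt)
  have := hrange.to_subtype
  let e := Finite.equivFin (Set.range φ)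
  choose h hh using fun i => (e.symm i).2
  refine ⟨_, h, fun f => ⟨e ⟨φ f, f, rfl⟩, ?_⟩⟩
  have hφf : φ (h (e ⟨φ f, f, rfl⟩)) = φ f := (hh _).trans (congrArg Subtype.val (e.symm_apply_apply _))
  exact (hφ f).exists_conj (hφf.subst (motive := IsConjLift _) (hφ _))
end

section
/- Let G be a finite group, N a normal subgroup, V a nonzero finite-dimensional complex vector space, and σ : N → GL(V) a homomorphism whose associated representation is irreducible (the only σ(N)-invariant subspaces of V are 0 and V). Realize the induced representation of G on the space W = { F : G → V : F(n·g) = σ(n)(F(g)) for all n ∈ N, g ∈ G }, with G acting by (g·F)(x) = F(x·g). Then the dimension over ℂ of the space of G-equivariant linear endomorphisms of W equals the number of cosets gN ∈ G/N such that the conjugate representation σ^g, defined by σ^g(n) = σ(g n g⁻¹), is isomorphic to σ. (This is the Mackey-theoretic fact behind equation (5.9): End_{𝒮_φ}(ind_{𝒮_φ^M}^{𝒮_φ} σ) is a twisted group algebra of the geometric R-group 𝕽_{φ,σ}, the stabilizer of σ in 𝒮_φ/𝒮_φ^M.) -/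
namespace CliffordMackey

variable {G : Type*} [Group G] {N : Subgroup G} (hN : N.Normal)
  {V : Type*} [AddCommGroup V] [Module ℂ V] (σ : N →* (V ≃ₗ[ℂ] V))

/-- The element `g n g⁻¹` of the normal subgroup `N`. -/
def conj (g : G) (n : N) : N := ⟨g * (n : G) * g⁻¹, hN.conj_mem (n : G) n.2 g⟩

/-- The space of intertwining maps from `σ^g` to `σ`. -/
def conjIntertwiners (g : G) : Submodule ℂ (V →ₗ[ℂ] V) where
  carrier := {f | ∀ (n : N) (v : V), f (σ (conj hN g n) v) = σ n (f v)}
  zero_mem' := by simp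
  add_mem' := by
    intro a b ha hb n v
    simp [ha n v, hb n v]
  smul_mem' := by
    intro c a ha n v
    simp [ha n v]

variable {hN σ}

lemma conj_conj_inv (g : G) (n : N) : conj hN g (conj hN g⁻¹ n) = n := by
  ext
  simp [conj, mul_assoc]

/-- Schur's lemma: a nonzero intertwining map from `σ^g` to an irreducible `σ` is injective. -/
lemma injective_of_mem_conjIntertwiners
    (hirr : ∀ U : Submodule ℂ V, (∀ (n : N) (v : V), v ∈ U → σ n v ∈ U) → U = ⊥ ∨ U = ⊤)
    {g : G} {f : V →ₗ[ℂ] V} (hf : f ∈ conjIntertwiners hN σ g) (hf0 : f ≠ 0) :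
    Function.Injective f := by
  rcases hirr (LinearMap.ker f) (fun n v hv => by
    have := hf (conj hN g⁻¹ n) v
    rw [conj_conj_inv, LinearMap.mem_ker.1 hv, map_zero] at this
    exact this) with h | h
  · exact LinearMap.ker_eq_bot.1 h
  · exact absurd (LinearMap.ker_eq_top.1 h) hf0

lemma finrank_conjIntertwiners_eq_one [FiniteDimensional ℂ V] [Nontrivial V]
    (hirr : ∀ U : Submodule ℂ V, (∀ (n : N) (v : V), v ∈ U → σ n v ∈ U) → U = ⊥ ∨ U = ⊤)
    {g : G} {f : V →ₗ[ℂ] V} (hf : f ∈ conjIntertwiners hN σ g) (hf0 : f ≠ 0) :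
    Module.finrank ℂ (conjIntertwiners hN σ g) = 1 := by
  let e := LinearEquiv.ofInjectiveEndo f (injective_of_mem_conjIntertwiners hirr hf hf0)
  refine finrank_eq_one (⟨f, hf⟩ : conjIntertwiners hN σ g)
    (fun h => hf0 (congrArg Subtype.val h)) ?_
  rintro ⟨k, hk⟩
  obtain ⟨μ, hμ⟩ := Module.End.exists_eigenvalue (e.symm.toLinearMap ∘ₗ k : Module.End ℂ V)
  obtain ⟨v, hv⟩ := hμ.exists_hasEigenvector
  have hkv : k v = μ • f v := by
    have h : e.symm (k v) = μ • v := hv.apply_eq_smul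
    rw [LinearEquiv.symm_apply_eq, map_smul] at h
    exact h
  refine ⟨μ, Subtype.ext ?_⟩
  by_contra hne
  have hmem : μ • f - k ∈ conjIntertwiners hN σ g :=
    sub_mem (Submodule.smul_mem _ _ hf) hk
  refine hv.2 (injective_of_mem_conjIntertwiners hirr hmem (fun h => hne (sub_eq_zero.1 h)) ?_)
  simp [hkv]

/-- Isomorphy of `σ^g` and `σ` for some `g` in a coset gives a nonzero intertwining map for every
representative of that coset. -/
lemma exists_mem_conjIntertwiners_ne_zero [Nontrivial V] {g r : G}
    (hgr : (QuotientGroup.mk g : G ⧸ N) = QuotientGroup.mk r) (e : V ≃ₗ[ℂ] V)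
    (he : ∀ (n : N) (v : V), e (σ n v) = σ (conj hN g n) (e v)) :
    ∃ f ∈ conjIntertwiners hN σ r, f ≠ 0 := by
  let m : N := ⟨g⁻¹ * r, QuotientGroup.eq.1 hgr⟩
  let e' : V ≃ₗ[ℂ] V := (σ m).trans e
  have he' : ∀ (n : N) (v : V), e' (σ n v) = σ (conj hN r n) (e' v) := by
    intro n v
    have h1 : conj hN r n = conj hN g (m * n * m⁻¹) := by
      ext
      simp [conj, m, mul_assoc]
    have h2 : σ (m * n * m⁻¹) (σ m v) = σ m (σ n v) := by
      rw [← LinearEquiv.mul_apply, ← map_mul, inv_mul_cancel_right, map_mul,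
        LinearEquiv.mul_apply]
    rw [h1]
    simp only [e', LinearEquiv.trans_apply]
    rw [← he, h2]
  refine ⟨e'.symm.toLinearMap, fun n v => ?_, fun h => ?_⟩
  · simp only [LinearEquiv.coe_coe]
    rw [LinearEquiv.symm_apply_eq, he', LinearEquiv.apply_symm_apply]
  · obtain ⟨v, hv⟩ := exists_ne (0 : V)
    exact hv (e'.symm.map_eq_zero_iff.1 (LinearMap.congr_fun h v))

lemma exists_equiv_of_mem_conjIntertwiners [FiniteDimensional ℂ V]
    (hirr : ∀ U : Submodule ℂ V, (∀ (n : N) (v : V), v ∈ U → σ n v ∈ U) → U = ⊥ ∨ U = ⊤)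
    {g : G} {f : V →ₗ[ℂ] V} (hf : f ∈ conjIntertwiners hN σ g) (hf0 : f ≠ 0) :
    ∃ e : V ≃ₗ[ℂ] V, ∀ (n : N) (v : V), e (σ n v) = σ (conj hN g n) (e v) := by
  let e := LinearEquiv.ofInjectiveEndo f (injective_of_mem_conjIntertwiners hirr hf hf0)
  refine ⟨e.symm, fun n v => ?_⟩
  rw [LinearEquiv.symm_apply_eq]
  have h : e (σ (conj hN g n) (e.symm v)) = σ n (e (e.symm v)) := hf n (e.symm v)
  rw [h, LinearEquiv.apply_symm_apply]

lemma mul_inv_out_mem (hN : N.Normal) {x : G} {c : G ⧸ N} (h : QuotientGroup.mk x = c) :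
    x * c.out⁻¹ ∈ N := by
  have h1 : (QuotientGroup.mk c.out : G ⧸ N) = QuotientGroup.mk x := by
    rw [h]
    exact QuotientGroup.out_eq' c
  exact hN.mem_comm (QuotientGroup.eq.1 h1)

lemma mk_mul_left (hN : N.Normal) (n : N) (x : G) :
    (QuotientGroup.mk ((n : G) * x) : G ⧸ N) = QuotientGroup.mk x := by
  rw [eq_comm, QuotientGroup.eq]
  have := hN.conj_mem n n.2 x⁻¹
  simpa [mul_assoc] using this

open Classical in
/-- The function on `G` supported on the coset `c` with value `v` at the representative of `c`
and equivariant under left translation by `N`. -/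
noncomputable def delta (hN : N.Normal) (σ : N →* (V ≃ₗ[ℂ] V)) (c : G ⧸ N) : V →ₗ[ℂ] (G → V) where
  toFun v x := if h : QuotientGroup.mk x = c then σ ⟨x * c.out⁻¹, mul_inv_out_mem hN h⟩ v else 0
  map_add' u v := by
    ext x
    by_cases h : QuotientGroup.mk x = c <;> simp [h]
  map_smul' a v := by
    ext x
    by_cases h : QuotientGroup.mk x = c <;> simp [h]

lemma delta_of_eq {c : G ⧸ N} {x : G} (h : QuotientGroup.mk x = c) (v : V) :
    delta hN σ c v x = σ ⟨x * c.out⁻¹, mul_inv_out_mem hN h⟩ v :=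
  dif_pos h

lemma delta_of_ne {c : G ⧸ N} {x : G} (h : QuotientGroup.mk x ≠ c) (v : V) :
    delta hN σ c v x = 0 :=
  dif_neg h

lemma delta_mul_left (c : G ⧸ N) (v : V) (n : N) (x : G) :
    delta hN σ c v ((n : G) * x) = σ n (delta hN σ c v x) := by
  by_cases h : QuotientGroup.mk x = c
  · rw [delta_of_eq h, delta_of_eq ((mk_mul_left hN n x).trans h), ← LinearEquiv.mul_apply,
      ← map_mul]
    congr 2
    ext
    simp [mul_assoc]
  · rw [delta_of_ne h, delta_of_ne (by rwa [mk_mul_left hN]), map_zero]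

lemma delta_mul_right (c : G ⧸ N) (v : V) (n : N) (x : G) :
    delta hN σ c v (x * n) = delta hN σ c (σ (conj hN c.out n) v) x := by
  have hx : (QuotientGroup.mk (x * n) : G ⧸ N) = QuotientGroup.mk x :=
    QuotientGroup.mk_mul_of_mem x n.2
  by_cases h : QuotientGroup.mk x = c
  · rw [delta_of_eq h, delta_of_eq (hx.trans h), ← LinearEquiv.mul_apply, ← map_mul]
    congr 2
    ext
    simp [conj, mul_assoc]
  · rw [delta_of_ne h, delta_of_ne (by rwa [hx])]

lemma delta_out_self (c : G ⧸ N) (v : V) : delta hN σ c v c.out = v := by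
  rw [delta_of_eq (QuotientGroup.out_eq' c)]
  have : (⟨c.out * c.out⁻¹, mul_inv_out_mem hN (QuotientGroup.out_eq' c)⟩ : N) = 1 := by
    ext
    simp
  rw [this, map_one, LinearEquiv.coe_one, id]

lemma delta_out_of_ne {c d : G ⧸ N} (h : d ≠ c) (v : V) : delta hN σ c v d.out = 0 :=
  delta_of_ne (by rwa [QuotientGroup.out_eq' d]) v

lemma sum_delta [Fintype (G ⧸ N)] {F : G → V}
    (hF : ∀ (n : N) (g : G), F ((n : G) * g) = σ n (F g)) :
    ∑ c : G ⧸ N, delta hN σ c (F c.out) = F := by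
  ext x
  rw [Finset.sum_apply, Finset.sum_eq_single (QuotientGroup.mk x : G ⧸ N)
    (fun c _ hc => delta_of_ne hc.symm _) (by simp), delta_of_eq rfl, ← hF]
  simp

section Induced

variable (hN) {Wsp : Submodule ℂ (G → V)}
  (hW : ∀ F : G → V, F ∈ Wsp ↔ ∀ (n : N) (g : G), F ((n : G) * g) = σ n (F g))

/-- `delta` with values in the induced space. -/
noncomputable def deltaInduced (c : G ⧸ N) : V →ₗ[ℂ] Wsp :=
  (delta hN σ c).codRestrict Wsp fun v => (hW _).2 (delta_mul_left c v)

variable [Fintype (G ⧸ N)]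

variable {hN} in
/-- The endomorphism `(T F)(x) = ∑ c, h c (F (r_c x))` of the induced space attached to a family of
intertwining maps, where `r_c` is the representative of `c`. -/
noncomputable def ofIntertwiners (h : ∀ c : G ⧸ N, conjIntertwiners hN σ c.out) : Wsp →ₗ[ℂ] Wsp where
  toFun F := ⟨fun x => ∑ c : G ⧸ N, (h c : V →ₗ[ℂ] V) ((F : G → V) (c.out * x)), by
    rw [hW]
    intro n x
    rw [map_sum]
    refine Finset.sum_congr rfl fun c _ => ?_
    rw [← (h c).2 n, ← (hW _).1 F.2]
    simp [conj, mul_assoc]⟩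
  map_add' F F' := by
    ext x
    simp [Finset.sum_add_distrib]
  map_smul' a F := by
    ext x
    simp [Finset.smul_sum]

variable {hN} in
lemma ofIntertwiners_apply (h : ∀ c : G ⧸ N, conjIntertwiners hN σ c.out) (F : Wsp) (x : G) :
    (ofIntertwiners hW h F : G → V) x =
      ∑ c : G ⧸ N, (h c : V →ₗ[ℂ] V) ((F : G → V) (c.out * x)) :=
  rfl

/-- Equivariant endomorphisms of the induced space correspond to families of intertwining maps
from `σ^{r_c}` to `σ`, where `r_c` runs over representatives of the cosets of `N`. -/
noncomputable def equivariantEndEquiv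
    {A : G → (Wsp →ₗ[ℂ] Wsp)}
    (hA : ∀ (g : G) (F : Wsp) (x : G), ((A g F : G → V) x) = (F : G → V) (x * g))
    {Esp : Submodule ℂ (Wsp →ₗ[ℂ] Wsp)}
    (hE : ∀ T : Wsp →ₗ[ℂ] Wsp, T ∈ Esp ↔ ∀ (g : G) (F : Wsp), T (A g F) = A g (T F)) :
    Esp ≃ₗ[ℂ] (∀ c : G ⧸ N, conjIntertwiners hN σ c.out) where
  toFun T c := ⟨LinearMap.proj (1 : G) ∘ₗ Wsp.subtype ∘ₗ (T : Wsp →ₗ[ℂ] Wsp) ∘ₗ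
      deltaInduced hN hW c, fun n v => by
    have h1 : deltaInduced hN hW c (σ (conj hN c.out n) v) = A n (deltaInduced hN hW c v) := by
      ext x
      rw [hA]
      exact (delta_mul_right c v n x).symm
    simp only [LinearMap.comp_apply, LinearMap.proj_apply, Submodule.subtype_apply]
    rw [h1, (hE _).1 T.2, hA, one_mul, ← (hW _).1 (Subtype.property _), mul_one]⟩
  map_add' _ _ := rfl
  map_smul' _ _ := rfl
  invFun h := ⟨ofIntertwiners hW h, (hE _).2 fun g F => by
    ext x
    simp only [hA, ofIntertwiners_apply, mul_assoc]⟩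
  left_inv T := by
    refine Subtype.ext (LinearMap.ext fun F => Subtype.ext (funext fun x => ?_))
    have h1 : ∑ c : G ⧸ N, deltaInduced hN hW c ((F : G → V) (c.out * x)) = A x F := by
      refine Subtype.ext ?_
      rw [← sum_delta (hN := hN) ((hW _).1 (A x F).2), AddSubmonoidClass.coe_finsetSum]
      refine Finset.sum_congr rfl fun c _ => ?_
      rw [hA]
      rfl
    have h2 : (((T : Wsp →ₗ[ℂ] Wsp) (A x F) : Wsp) : G → V) 1 =
        ((T : Wsp →ₗ[ℂ] Wsp) F : G → V) x := by
      rw [(hE _).1 T.2, hA, one_mul]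
    rw [← h2, ← h1, map_sum, AddSubmonoidClass.coe_finsetSum, Finset.sum_apply]
    rfl
  right_inv h := by
    refine funext fun c => Subtype.ext (LinearMap.ext fun v => ?_)
    change ∑ d : G ⧸ N, (h d : V →ₗ[ℂ] V) (delta hN σ c v (d.out * 1)) = _
    rw [Finset.sum_eq_single c (fun d _ hd => by rw [mul_one, delta_out_of_ne hd, map_zero])
      (by simp), mul_one, delta_out_self]

end Induced

end CliffordMackey


/-- Mackey's intertwining number theorem behind equation (5.9): let `G` be a finite group,
`N` a normal subgroup, `σ : N → GL(V)` an irreducible representation on a nonzero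
finite-dimensional complex space `V`. Realize the induced representation of `G` on
`W = {F : G → V : F(n·g) = σ(n)(F g)}`, with `G` acting by `(g·F)(x) = F(x·g)`.
Then the dimension of the space of `G`-equivariant endomorphisms of `W` equals the
number of cosets `gN ∈ G/N` with `σ^g ≅ σ`, where `σ^g(n) = σ(g n g⁻¹)`. -/
theorem dim_equivariant_endomorphisms_of_induced_eq_card_stabilizing_cosets
    {G : Type*} [Group G] [Fintype G] (N : Subgroup G) (hN : N.Normal)
    {V : Type*} [AddCommGroup V] [Module ℂ V] [FiniteDimensional ℂ V] [Nontrivial V]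
    (σ : N →* (V ≃ₗ[ℂ] V))
    (hirr : ∀ U : Submodule ℂ V, (∀ (n : N) (v : V), v ∈ U → σ n v ∈ U) → U = ⊥ ∨ U = ⊤)
    (Wsp : Submodule ℂ (G → V))
    (hW : ∀ F : G → V, F ∈ Wsp ↔ ∀ (n : N) (g : G), F ((n : G) * g) = σ n (F g))
    (A : G → (Wsp →ₗ[ℂ] Wsp))
    (hA : ∀ (g : G) (F : Wsp) (x : G), ((A g F : G → V) x) = (F : G → V) (x * g))
    (Esp : Submodule ℂ (Wsp →ₗ[ℂ] Wsp))
    (hE : ∀ T : Wsp →ₗ[ℂ] Wsp, T ∈ Esp ↔ ∀ (g : G) (F : Wsp), T (A g F) = A g (T F)) :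
    Set.finrank ℂ (Esp : Set (Wsp →ₗ[ℂ] Wsp)) =
      Nat.card {c : G ⧸ N //
        ∃ g : G, (QuotientGroup.mk g : G ⧸ N) = c ∧
          ∃ e : V ≃ₗ[ℂ] V, ∀ (n : N) (v : V),
            e (σ n v) = σ ⟨g * (n : G) * g⁻¹, hN.conj_mem (n : G) n.2 g⟩ (e v)} := by
  classical
  rw [Set.finrank, Submodule.span_eq,
    (CliffordMackey.equivariantEndEquiv hN hW hA hE).finrank_eq, Module.finrank_pi_fintype,
    Nat.card_eq_fintype_card, Fintype.card_subtype, Finset.card_filter]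
  refine Finset.sum_congr rfl fun c _ => ?_
  split_ifs with hc
  · obtain ⟨g, hg, e, he⟩ := hc
    obtain ⟨f, hf, hf0⟩ := CliffordMackey.exists_mem_conjIntertwiners_ne_zero (hN := hN)
      (hg.trans (QuotientGroup.out_eq' c).symm) e he
    exact CliffordMackey.finrank_conjIntertwiners_eq_one hirr hf hf0
  · rw [Submodule.finrank_eq_zero, Submodule.eq_bot_iff]
    intro f hf
    by_contra hf0
    exact hc ⟨c.out, QuotientGroup.out_eq' c,
      CliffordMackey.exists_equiv_of_mem_conjIntertwiners hirr hf hf0⟩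
end
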